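/- Let (u, v) be an H-continuous pair on Ω. Then the set W = { x ∈ Ω : u(x) < v(x) } is meagre in Ω (with the subspace topology), and the function u (which coincides with v outside W) is continuous on Ω \ W. -/

import Mathlib

open Set

/-- Points of `ℝⁿ`. -/
abbrev Pt (n : ℕ) := EuclideanSpace ℝ (Fin n)

/-- Lower Baire operator `I(D,Ω,f)(x) = sup_{δ>0} inf { f y : y ∈ B_δ(x) ∩ D }`,
where `B_δ(x) = { y ∈ Ω : ‖y - x‖ < δ }`. -/
noncomputable def Ilow {n : ℕ} (D Om : Set (Pt n)) (f : Pt n → ℝ) (x : Pt n) : ℝ :=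
  sSup {a : ℝ | ∃ δ : ℝ, 0 < δ ∧
    a = sInf (f '' {y | y ∈ Om ∧ ‖y - x‖ < δ ∧ y ∈ D})}

/-- Upper Baire operator `S(D,Ω,f)(x) = inf_{δ>0} sup { f y : y ∈ B_δ(x) ∩ D }`. -/
noncomputable def Shigh {n : ℕ} (D Om : Set (Pt n)) (f : Pt n → ℝ) (x : Pt n) : ℝ :=
  sInf {a : ℝ | ∃ δ : ℝ, 0 < δ ∧
    a = sSup (f '' {y | y ∈ Om ∧ ‖y - x‖ < δ ∧ y ∈ D})}

/-- `f`, defined on `D ⊆ Ω`, is locally bounded relative to `Ω`. -/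
def LocBddOn {n : ℕ} (Om D : Set (Pt n)) (f : Pt n → ℝ) : Prop :=
  ∀ x ∈ Om, ∃ δ : ℝ, 0 < δ ∧ ∃ M : ℝ,
    ∀ y, y ∈ Om → ‖y - x‖ < δ → y ∈ D → |f y| < M

/-- `(u, v)` encodes an interval-valued function `x ↦ [u x, v x]` on `Om`. -/
def IntervalPair {n : ℕ} (Om : Set (Pt n)) (u v : Pt n → ℝ) : Prop :=
  LocBddOn Om Om u ∧ LocBddOn Om Om v ∧ ∀ x ∈ Om, u x ≤ v x

/-- The pair `(u, v)` is S-continuous on `Om`: `I(u) = u` and `S(v) = v`. -/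
def SCont {n : ℕ} (Om : Set (Pt n)) (u v : Pt n → ℝ) : Prop :=
  ∀ x ∈ Om, Ilow Om Om u x = u x ∧ Shigh Om Om v x = v x

/-- The pair `(u, v)` is Hausdorff continuous on `Om`. -/
def HCont {n : ℕ} (Om : Set (Pt n)) (u v : Pt n → ℝ) : Prop :=
  ∀ p q : Pt n → ℝ, LocBddOn Om Om p → LocBddOn Om Om q →
    (∀ x ∈ Om, u x ≤ p x ∧ p x ≤ q x ∧ q x ≤ v x) →
    ∀ x ∈ Om, Ilow Om Om p x = u x ∧ Shigh Om Om q x = v x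

/-- `(u, v)` is an H-continuous interval pair on `Om`. -/
def HContPair {n : ℕ} (Om : Set (Pt n)) (u v : Pt n → ℝ) : Prop :=
  IntervalPair Om u v ∧ HCont Om u v

/-- Lower endpoint of the pointwise interval product. -/
noncomputable def imin {n : ℕ} (u₁ v₁ u₂ v₂ : Pt n → ℝ) (x : Pt n) : ℝ :=
  min (min (u₁ x * u₂ x) (u₁ x * v₂ x)) (min (v₁ x * u₂ x) (v₁ x * v₂ x))

/-- Upper endpoint of the pointwise interval product. -/
noncomputable def imax {n : ℕ} (u₁ v₁ u₂ v₂ : Pt n → ℝ) (x : Pt n) : ℝ :=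
  max (max (u₁ x * u₂ x) (u₁ x * v₂ x)) (max (v₁ x * u₂ x) (v₁ x * v₂ x))

/-- `(pl, pu)` is the H-continuous pair contained pointwise in the interval sum of
`(u₁, v₁)` and `(u₂, v₂)`, i.e. `(pl, pu) = (u₁,v₁) ⊕ (u₂,v₂)`. -/
def IsOplus {n : ℕ} (Om : Set (Pt n)) (u₁ v₁ u₂ v₂ pl pu : Pt n → ℝ) : Prop :=
  HContPair Om pl pu ∧
    ∀ x ∈ Om, u₁ x + u₂ x ≤ pl x ∧ pl x ≤ pu x ∧ pu x ≤ v₁ x + v₂ x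

/-- `(ql, qu)` is the H-continuous pair contained pointwise in the interval product of
`(u₁, v₁)` and `(u₂, v₂)`, i.e. `(ql, qu) = (u₁,v₁) ⊗ (u₂,v₂)`. -/
def IsOtimes {n : ℕ} (Om : Set (Pt n)) (u₁ v₁ u₂ v₂ ql qu : Pt n → ℝ) : Prop :=
  HContPair Om ql qu ∧
    ∀ x ∈ Om, imin u₁ v₁ u₂ v₂ x ≤ ql x ∧ ql x ≤ qu x ∧ qu x ≤ imax u₁ v₁ u₂ v₂ x

/-!
If `f` is lower semicontinuous and real-valued, a point `x` where it fails to be upper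
semicontinuous admits a rational `q > f x` that `f` exceeds arbitrarily close to `x`, so `x` lies on
the frontier of the closed set `{f ≤ q}`. Such a frontier is nowhere dense, hence the
discontinuities of `f` form a meagre set.

H-continuity with `p = q = u` gives `I(u) = u`, so `u` is lower semicontinuous on `Ω`, and
`S(u) = v`, so `v x ≤ u x` holds exactly when `u` is upper semicontinuous at `x`. Hence `W` is the
set of discontinuities of `u`.
-/

open Filter Metric Topology

section Semicontinuity

variable {X α : Type*} [TopologicalSpace X] [LinearOrder α] [TopologicalSpace α] [OrderTopology α]

theorem isNowhereDense_frontier_of_isClosed {s : Set X} (hs : IsClosed s) :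
    IsNowhereDense (frontier s) :=
  isClosed_frontier.isNowhereDense_iff.2 (interior_frontier hs)

theorem exists_mem_frontier_preimage_Iic_of_not_upperSemicontinuousAt [DenselyOrdered α]
    {f : X → α} {x : X} (hf : ¬UpperSemicontinuousAt f x) {T : Set α} (hT : Dense T) :
    ∃ q ∈ T, x ∈ frontier (f ⁻¹' Iic q) := by
  simp only [upperSemicontinuousAt_iff, not_forall] at hf
  obtain ⟨a, hxa, hfreq⟩ := hf
  obtain ⟨q, hqT, hxq, hqa⟩ := hT.exists_between hxa
  refine ⟨q, hqT, subset_closure hxq.le, fun hint => hfreq ?_⟩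
  filter_upwards [mem_interior_iff_mem_nhds.1 hint] with y hy using lt_of_le_of_lt hy hqa

theorem isMeagre_setOf_not_continuousAt_of_lowerSemicontinuous [DenselyOrdered α]
    [TopologicalSpace.SeparableSpace α] {f : X → α} (hf : LowerSemicontinuous f) :
    IsMeagre {x | ¬ContinuousAt f x} := by
  obtain ⟨T, hTcount, hT⟩ := TopologicalSpace.exists_countable_dense α
  have hcover : {x | ¬ContinuousAt f x} ⊆ ⋃ q ∈ T, frontier (f ⁻¹' Iic q) := fun x hx => by
    have hupper : ¬UpperSemicontinuousAt f x := fun h =>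
      hx (continuousAt_iff_lower_upperSemicontinuousAt.2 ⟨hf x, h⟩)
    exact mem_iUnion₂.2 <| by
      simpa only [exists_prop] using
        exists_mem_frontier_preimage_Iic_of_not_upperSemicontinuousAt hupper hT
  exact (isMeagre_biUnion hTcount fun q _ =>
    (isNowhereDense_frontier_of_isClosed (hf.isClosed_preimage q)).isMeagre).mono hcover

end Semicontinuity

section BaireOperators

variable {n : ℕ} {D Om : Set (Pt n)} {f : Pt n → ℝ} {x : Pt n}

theorem Shigh_eq_iInf_ball (D Om : Set (Pt n)) (f : Pt n → ℝ) (x : Pt n) :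
    Shigh D Om f x = ⨅ δ : Ioi (0 : ℝ), sSup (f '' (ball x δ ∩ (Om ∩ D))) := by
  have hball (δ : ℝ) :
      {y | y ∈ Om ∧ ‖y - x‖ < δ ∧ y ∈ D} = ball x δ ∩ (Om ∩ D) := by
    ext y
    simp only [mem_ofPred_eq, mem_inter_iff, mem_ball_iff_norm]
    tauto
  simp only [Shigh, hball, iInf]
  congr 1
  ext a
  simp [eq_comm]

theorem Shigh_neg (D Om : Set (Pt n)) (f : Pt n → ℝ) (x : Pt n) :
    Shigh D Om (-f) x = -Ilow D Om f x := by
  have hsSup (s : Set (Pt n)) : sSup ((-f) '' s) = -sInf (f '' s) := by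
    rw [← Real.sSup_neg, ← image_neg_eq_neg, image_image]
    rfl
  simp only [Shigh, Ilow, hsSup]
  rw [← Real.sInf_neg]
  congr 1
  ext a
  simp [neg_eq_iff_eq_neg]

theorem bddBelow_range_sSup_image_ball {E : Type*} [PseudoMetricSpace E] {s : Set E} {f : E → ℝ}
    {x : E} (hx : x ∈ s) :
    BddBelow (range fun δ : Ioi (0 : ℝ) => sSup (f '' (ball x δ ∩ s))) := by
  refine ⟨min (f x) 0, ?_⟩
  rintro _ ⟨⟨δ, hδ⟩, rfl⟩
  by_cases hb : BddAbove (f '' (ball x δ ∩ s))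
  · exact min_le_of_left_le (le_csSup hb ⟨x, ⟨mem_ball_self hδ, hx⟩, rfl⟩)
  · exact min_le_of_right_le (Real.sSup_of_not_bddAbove hb).ge

theorem Shigh_le_sSup_image_ball (hx : x ∈ Om ∩ D) {δ : ℝ} (hδ : 0 < δ) :
    Shigh D Om f x ≤ sSup (f '' (ball x δ ∩ (Om ∩ D))) := by
  rw [Shigh_eq_iInf_ball]
  exact ciInf_le (bddBelow_range_sSup_image_ball hx) ⟨δ, hδ⟩

theorem Shigh_le_of_eventually_le (hx : x ∈ Om ∩ D) {a : ℝ}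
    (ha : ∀ᶠ y in 𝓝[Om ∩ D] x, f y ≤ a) : Shigh D Om f x ≤ a := by
  obtain ⟨δ, hδ, hle⟩ := nhdsWithin_basis_ball.eventually_iff.1 ha
  exact (Shigh_le_sSup_image_ball hx hδ).trans <|
    csSup_le ⟨f x, x, ⟨mem_ball_self hδ, hx⟩, rfl⟩ (forall_mem_image.2 fun _ hy => hle hy)

-- `sSup` of an unbounded set of reals is `0`. If `f` is unbounded above on one ball, it is so on a
-- ball around every point, whence `S(f) ≤ 0`; then `f ≤ S(f)` bounds `f` by `0` after all.
theorem bddAbove_image_ball_of_le_Shigh (hf : ∀ z ∈ Om ∩ D, f z ≤ Shigh D Om f z) (x : Pt n)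
    (δ : ℝ) : BddAbove (f '' (ball x δ ∩ (Om ∩ D))) := by
  by_contra hunbdd
  refine hunbdd ⟨0, forall_mem_image.2 fun z hz => (hf z hz.2).trans ?_⟩
  have hsubset : ball x δ ⊆ ball z (δ + dist x z) := ball_subset_ball' le_rfl
  have hunbdd_z : ¬BddAbove (f '' (ball z (δ + dist x z) ∩ (Om ∩ D))) := fun h =>
    hunbdd (h.mono (image_mono (inter_subset_inter_left _ hsubset)))
  have hpos : 0 < δ + dist x z := add_pos_of_pos_of_nonneg (pos_of_mem_ball hz.1) dist_nonneg
  exact (Shigh_le_sSup_image_ball hz.2 hpos).trans_eq (Real.sSup_of_not_bddAbove hunbdd_z)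

theorem eventually_lt_of_Shigh_lt (hf : ∀ z ∈ Om ∩ D, f z ≤ Shigh D Om f z) {a : ℝ}
    (ha : Shigh D Om f x < a) : ∀ᶠ y in 𝓝[Om ∩ D] x, f y < a := by
  rw [Shigh_eq_iInf_ball] at ha
  obtain ⟨⟨δ, hδ⟩, hlt⟩ := exists_lt_of_ciInf_lt ha
  exact nhdsWithin_basis_ball.eventually_iff.2 ⟨δ, hδ, fun y hy =>
    (le_csSup (bddAbove_image_ball_of_le_Shigh hf x δ) (mem_image_of_mem f hy)).trans_lt hlt⟩

theorem upperSemicontinuousWithinAt_iff_Shigh_le (hf : ∀ z ∈ Om ∩ D, f z ≤ Shigh D Om f z)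
    (hx : x ∈ Om ∩ D) : UpperSemicontinuousWithinAt f (Om ∩ D) x ↔ Shigh D Om f x ≤ f x := by
  rw [upperSemicontinuousWithinAt_iff]
  exact ⟨fun h => le_of_forall_gt_imp_ge_of_dense fun a ha =>
      Shigh_le_of_eventually_le hx ((h a ha).mono fun _ => le_of_lt),
    fun h _ ha => eventually_lt_of_Shigh_lt hf (h.trans_lt ha)⟩

theorem lowerSemicontinuousWithinAt_iff_le_Ilow (hf : ∀ z ∈ Om ∩ D, Ilow D Om f z ≤ f z)
    (hx : x ∈ Om ∩ D) : LowerSemicontinuousWithinAt f (Om ∩ D) x ↔ f x ≤ Ilow D Om f x := by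
  have hneg : ∀ z ∈ Om ∩ D, (-f) z ≤ Shigh D Om (-f) z := fun z hz => by
    simpa only [Shigh_neg, Pi.neg_apply, neg_le_neg_iff] using hf z hz
  rw [← upperSemicontinuousWithinAt_neg_iff, upperSemicontinuousWithinAt_iff_Shigh_le hneg hx,
    Shigh_neg, Pi.neg_apply, neg_le_neg_iff]

theorem lowerSemicontinuousOn_of_Ilow_eq (hI : ∀ z ∈ Om ∩ D, Ilow D Om f z = f z) :
    LowerSemicontinuousOn f (Om ∩ D) := fun x hx =>
  (lowerSemicontinuousWithinAt_iff_le_Ilow (fun z hz => (hI z hz).le) hx).2 (hI x hx).ge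

theorem continuousWithinAt_iff_Shigh_le (hI : ∀ z ∈ Om ∩ D, Ilow D Om f z = f z)
    (hf : ∀ z ∈ Om ∩ D, f z ≤ Shigh D Om f z) (hx : x ∈ Om ∩ D) :
    ContinuousWithinAt f (Om ∩ D) x ↔ Shigh D Om f x ≤ f x := by
  rw [continuousWithinAt_iff_lower_upperSemicontinuousWithinAt,
    and_iff_right (lowerSemicontinuousOn_of_Ilow_eq hI x hx),
    upperSemicontinuousWithinAt_iff_Shigh_le hf hx]

end BaireOperators

theorem HContPair.Ilow_eq_and_Shigh_eq {n : ℕ} {Om : Set (Pt n)} {u v : Pt n → ℝ}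
    (h : HContPair Om u v) : ∀ x ∈ Om, Ilow Om Om u x = u x ∧ Shigh Om Om u x = v x :=
  h.2 u u h.1.1 h.1.1 fun x hx => ⟨le_rfl, le_rfl, h.1.2.2 x hx⟩

theorem stmt2_general {n : ℕ} {Om : Set (Pt n)} {u v : Pt n → ℝ} (huv : ∀ x ∈ Om, u x ≤ v x)
    (hF : ∀ x ∈ Om, Ilow Om Om u x = u x ∧ Shigh Om Om u x = v x) :
    IsMeagre {x : ↥Om | u ↑x < v ↑x} ∧
    ∀ x ∈ Om \ {x | x ∈ Om ∧ u x < v x}, ContinuousWithinAt u Om x := by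
  have hI : ∀ z ∈ Om ∩ Om, Ilow Om Om u z = u z := fun z hz => (hF z hz.1).1
  have hle : ∀ z ∈ Om ∩ Om, u z ≤ Shigh Om Om u z := fun z hz =>
    (huv z hz.1).trans_eq (hF z hz.1).2.symm
  have hlower : LowerSemicontinuousOn u Om := by
    simpa only [inter_self] using lowerSemicontinuousOn_of_Ilow_eq hI
  have hcont {x : Pt n} (hx : x ∈ Om) : ContinuousWithinAt u Om x ↔ v x ≤ u x := by
    simpa only [inter_self, (hF x hx).2] using continuousWithinAt_iff_Shigh_le hI hle ⟨hx, hx⟩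
  have hW : {x : ↥Om | u ↑x < v ↑x} = {x | ¬ContinuousAt (Om.domRestrict u) x} := by
    ext ⟨x, hx⟩
    simp only [mem_ofPred_eq, ← continuousWithinAt_iff_continuousAt_domRestrict u hx, hcont hx,
      not_le]
  refine ⟨?_, fun x hx => (hcont hx.1).2 (not_lt.1 fun hlt => hx.2 ⟨hx.1, hlt⟩)⟩
  rw [hW]
  exact isMeagre_setOf_not_continuousAt_of_lowerSemicontinuous
    (lowerSemicontinuous_restrict_iff.2 hlower)

theorem stmt2 {n : ℕ} (Om : Set (Pt n)) (u v : Pt n → ℝ)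
    (h : HContPair Om u v) :
    IsMeagre {x : ↥Om | u ↑x < v ↑x} ∧
    ContinuousOn u (Om \ {x | x ∈ Om ∧ u x < v x}) := by
  have hgen := stmt2_general h.1.2.2 h.Ilow_eq_and_Shigh_eq
  exact ⟨hgen.1, fun x hx => (hgen.2 x hx).mono sdiff_subset⟩
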